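/- Let M be a Malcev algebra over F lying in the variety H, containing L = sl2(F), and such that mL ≠ 0 for every nonzero m ∈ M. Then the subalgebra N_M of M, with the product inherited from M, is a Lie algebra; in particular J(x,y,z) = 0 for all x,y,z ∈ N_M. -/

import Mathlib

section
variable {K : Type*} [Field K] {M : Type*} [AddCommGroup M] [Module K M]

/-- the Jacobian `J(x,y,z) = (xy)z + (yz)x + (zx)y` -/
def mjac (μ : M →ₗ[K] M →ₗ[K] M) (x y z : M) : M :=
  μ (μ x y) z + μ (μ y z) x + μ (μ z x) y

/-- `{x,y,z} = (xy)z − (xz)y + 2·x(yz)` -/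
def mbr (μ : M →ₗ[K] M →ₗ[K] M) (x y z : M) : M :=
  μ (μ x y) z - μ (μ x z) y + (2 : K) • μ x (μ y z)

/-- `h(y,z,t,x,u) = {yz,t,u}x + {yz,t,x}u + {yx,z,u}t + {yu,z,x}t` -/
def mh (μ : M →ₗ[K] M →ₗ[K] M) (y z t x u : M) : M :=
  μ (mbr μ (μ y z) t u) x + μ (mbr μ (μ y z) t x) u +
    μ (mbr μ (μ y x) z u) t + μ (mbr μ (μ y u) z x) t

/-- A Malcev algebra structure: anticommutative (`x·x = 0`) together with the Malcev
identity `(xz)(yt) = ((xy)z)t + ((yz)t)x + ((zt)x)y + ((tx)y)z`. -/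
def IsMalcev (μ : M →ₗ[K] M →ₗ[K] M) : Prop :=
  (∀ x, μ x x = 0) ∧
    ∀ x y z t, μ (μ x z) (μ y t) =
      μ (μ (μ x y) z) t + μ (μ (μ y z) t) x + μ (μ (μ z t) x) y + μ (μ (μ t x) y) z

/-- the variety 𝓗 : `h(y,z,t,x,u) = 0` identically -/
def InVarietyH (μ : M →ₗ[K] M →ₗ[K] M) : Prop := ∀ y z t x u, mh μ y z t x u = 0

/-- `N_M = {m | J(m,a,b) = 0 ∀ a,b ∈ L}` -/
def NMset (μ : M →ₗ[K] M →ₗ[K] M) (L : Submodule K M) : Set M :=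
  {m : M | ∀ a ∈ L, ∀ b ∈ L, mjac μ m a b = 0}

/-- `J_M = {m | {m,a,b} = 0 ∀ a,b ∈ L}` -/
def JMset (μ : M →ₗ[K] M →ₗ[K] M) (L : Submodule K M) : Set M :=
  {m : M | ∀ a ∈ L, ∀ b ∈ L, mbr μ m a b = 0}

/-!
`N_M` is a Lie module over `L` by right multiplication, and the identity of `𝓗` forces its Casimir
element to act on `N_M` as on the adjoint module, up to vectors annihilated by `L`. Such vectors
vanish, so the Casimir operator is a nonzero scalar on `N_M` and `N_M = N_M · L`.

A bilinear map `B` with `B(xa, y) = B(x, ya)` for `a ∈ L` satisfies `B(x(ab), y) = -B(x, y(ab))`,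
because the order in which operators act is reversed on passing to the other side; hence
`2 B(x(ab), y) = 0`. Since `L = L · L` and `N_M = N_M · L`, such a `B` vanishes on `N_M`. The Malcev
identity makes `J(·, ·, c)` a map of this kind on `N_M`, first for `c ∈ L`, and then, once `J`
vanishes on `N_M × N_M × L`, for `c ∈ N_M` as well.
-/

section Casimir

variable {A : Type*} [Ring A] {e h f : A}

/-- Twice the Casimir element of an `sl₂`-triple, normalized by `he - eh = e`, `fh - hf = f` and
`2(fe - ef) = h`, plus the constant that makes it vanish on the adjoint module. The relations are
those of right multiplications, whose composition reverses products. -/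
def shiftedCasimir (e h f : A) : A :=
  2 + 2 * (e * f + f * e) - h * h

theorem commute_e_shiftedCasimir (he : h * e - e * h = e) (hef : 2 * (f * e - e * f) = h) :
    Commute e (shiftedCasimir e h f) := by
  unfold Commute SemiconjBy shiftedCasimir
  linear_combination (norm := noncomm_ring) he * h + h * he - e * hef - hef * e

theorem commute_f_shiftedCasimir (hf : f * h - h * f = f)
    (hef : 2 * (f * e - e * f) = h) : Commute f (shiftedCasimir e h f) := by
  unfold Commute SemiconjBy shiftedCasimir
  linear_combination (norm := noncomm_ring) f * hef + hef * f - hf * h - h * hf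

/-- Modulo the other relations, `2[f, heh] = h³ - h`. -/
theorem h_mul_h_mul_h_eq_h (he : h * e - e * h = e) (hf : f * h - h * f = f)
    (hef : 2 * (f * e - e * f) = h) (heh : h * e * h = 0) (hehf : e * h * f + f * h * e = 0) :
    h * h * h = h := by
  linear_combination (norm := noncomm_ring) 2 * (f * heh - heh * f) - 2 * hf * e * h -
    2 * h * e * hf - h * hef * h + 2 * f * he - 2 * he * f - 2 * hehf + hef

theorem h_mul_shiftedCasimir_eq_zero (he : h * e - e * h = e) (hf : f * h - h * f = f)
    (hef : 2 * (f * e - e * f) = h) (heh : h * e * h = 0) (hehf : e * h * f + f * h * e = 0) :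
    h * shiftedCasimir e h f = 0 := by
  have cube : h * h * h = h := h_mul_h_mul_h_eq_h he hf hef heh hehf
  unfold shiftedCasimir
  linear_combination (norm := noncomm_ring) 2 * hehf - cube - hef + 2 * he * f - 2 * hf * e

theorem e_mul_shiftedCasimir_eq_zero (he : h * e - e * h = e)
    (hef : 2 * (f * e - e * f) = h) (hC : h * shiftedCasimir e h f = 0) :
    e * shiftedCasimir e h f = 0 := by
  have comm := commute_e_shiftedCasimir he hef
  calc e * shiftedCasimir e h f
      = h * (e * shiftedCasimir e h f) - e * (h * shiftedCasimir e h f) := by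
        nth_rw 1 [← he]; noncomm_ring
    _ = h * shiftedCasimir e h f * e - e * (h * shiftedCasimir e h f) := by
        rw [comm.eq, mul_assoc]
    _ = 0 := by rw [hC, zero_mul, mul_zero, sub_zero]

theorem f_mul_shiftedCasimir_eq_zero (hf : f * h - h * f = f)
    (hef : 2 * (f * e - e * f) = h) (hC : h * shiftedCasimir e h f = 0) :
    f * shiftedCasimir e h f = 0 := by
  have comm := commute_f_shiftedCasimir hf hef
  calc f * shiftedCasimir e h f
      = f * (h * shiftedCasimir e h f) - h * (f * shiftedCasimir e h f) := by
        nth_rw 1 [← hf]; noncomm_ring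
    _ = f * (h * shiftedCasimir e h f) - h * shiftedCasimir e h f * f := by
        rw [comm.eq, mul_assoc]
    _ = 0 := by rw [hC, zero_mul, mul_zero, sub_zero]

theorem shiftedCasimir_eq_zero_of_faithful {R V : Type*} [Semiring R] [AddCommGroup V] [Module R V]
    {e h f : Module.End R V} (he : h * e - e * h = e) (hf : f * h - h * f = f)
    (hef : 2 * (f * e - e * f) = h) (heh : h * e * h = 0) (hehf : e * h * f + f * h * e = 0)
    (hfaith : ∀ v, e v = 0 → h v = 0 → f v = 0 → v = 0) : shiftedCasimir e h f = 0 := by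
  have hC := h_mul_shiftedCasimir_eq_zero he hf hef heh hehf
  ext v
  exact hfaith _ (LinearMap.congr_fun (e_mul_shiftedCasimir_eq_zero he hef hC) v)
    (LinearMap.congr_fun hC v)
    (LinearMap.congr_fun (f_mul_shiftedCasimir_eq_zero hf hef hC) v)

end Casimir

/-- `N` is a right Lie module over `L` under the product `μ`. The submodule `L` itself need not be
closed under `μ`. -/
structure IsLieModule (μ : M →ₗ[K] M →ₗ[K] M) (L N : Submodule K M) : Prop where
  mul_mem : ∀ n ∈ N, ∀ a ∈ L, μ n a ∈ N
  mul_mul : ∀ n ∈ N, ∀ a ∈ L, ∀ b ∈ L, μ n (μ a b) = μ (μ n a) b - μ (μ n b) a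

/-- `S` is a subalgebra of `(M, μ)` on which the Jacobi identity holds; anticommutativity is left
to `μ`. -/
structure IsLieSubalgebra (μ : M →ₗ[K] M →ₗ[K] M) (S : Submodule K M) : Prop where
  mul_mem : ∀ x ∈ S, ∀ y ∈ S, μ x y ∈ S
  mjac_eq_zero : ∀ x ∈ S, ∀ y ∈ S, ∀ z ∈ S, mjac μ x y z = 0

section LieModule

variable {μ : M →ₗ[K] M →ₗ[K] M} {L N : Submodule K M}

theorem IsLieModule.mbr_eq (hN : IsLieModule μ L N) {n a b : M} (hn : n ∈ N) (ha : a ∈ L)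
    (hb : b ∈ L) : mbr μ n a b = (3 : K) • μ n (μ a b) := by
  unfold mbr
  linear_combination (norm := module) -hN.mul_mul n hn a ha b hb

theorem IsLieModule.mul_identity_of_inVarietyH (hN : IsLieModule μ L N) (hVarH : InVarietyH μ)
    (h3 : (3 : K) ≠ 0) {n a b c d : M} (hn : n ∈ N) (ha : a ∈ L) (hb : b ∈ L) (hc : c ∈ L)
    (hd : d ∈ L) :
    μ (μ (μ n a) (μ b d)) c + μ (μ (μ n a) (μ b c)) d +
      μ (μ (μ n c) (μ a d)) b + μ (μ (μ n d) (μ a c)) b = 0 := by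
  have h : mh μ n a b c d = 0 := hVarH n a b c d
  unfold mh at h
  rw [hN.mbr_eq (hN.mul_mem n hn a ha) hb hd, hN.mbr_eq (hN.mul_mem n hn a ha) hb hc,
    hN.mbr_eq (hN.mul_mem n hn c hc) ha hd, hN.mbr_eq (hN.mul_mem n hn d hd) ha hc] at h
  simp only [map_smul, LinearMap.smul_apply, ← smul_add] at h
  exact (smul_eq_zero.mp h).resolve_left h3

/-- Right multiplication by an element of `L`, as an operator on the Lie module `N`. -/
def IsLieModule.rightMul (hN : IsLieModule μ L N) {a : M} (ha : a ∈ L) : Module.End K N :=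
  (μ.flip a).restrict fun n hn => hN.mul_mem n hn a ha

theorem IsLieModule.mul_H_mul_E_mul_H_eq_zero (hN : IsLieModule μ L N) (hVarH : InVarietyH μ)
    (h2 : (2 : K) ≠ 0) (h3 : (3 : K) ≠ 0) {E H : M} (hE : E ∈ L) (hH : H ∈ L) (hEH : μ E H = E)
    {n : M} (hn : n ∈ N) : μ (μ (μ n H) E) H = 0 := by
  have mul_HH : μ (μ n H) (μ H H) = 0 := by
    rw [hN.mul_mul _ (hN.mul_mem n hn H hH) H hH H hH, sub_self]
  have identity := hN.mul_identity_of_inVarietyH hVarH h3 hn hH hE hH hH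
  rw [hEH, mul_HH, map_zero, LinearMap.zero_apply, add_zero, add_zero, ← two_smul K] at identity
  exact (smul_eq_zero.mp identity).resolve_left h2

theorem IsLieModule.mul_F_mul_H_mul_E_add_eq_zero (hN : IsLieModule μ L N)
    (hVarH : InVarietyH μ) (h2 : (2 : K) ≠ 0) (h3 : (3 : K) ≠ 0) {E H F : M} (hE : E ∈ L)
    (hF : F ∈ L) (hEF : μ E F = (2⁻¹ : K) • H) {n : M} (hn : n ∈ N) :
    μ (μ (μ n F) H) E + μ (μ (μ n E) H) F = 0 := by
  have two_smul_mul_FE {m : M} (hm : m ∈ N) : (2 : K) • μ m (μ F E) = -μ m H := by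
    rw [hN.mul_mul m hm F hF E hE, ← neg_sub, ← hN.mul_mul m hm E hE F hF, hEF, map_smul,
      smul_neg, smul_inv_smul₀ h2]
  have identity := hN.mul_identity_of_inVarietyH hVarH h3 hn hF hF hE hE
  rw [add_assoc, ← two_smul K, ← two_smul K, ← LinearMap.smul_apply, ← map_smul,
    two_smul_mul_FE (hN.mul_mem n hn F hF), ← LinearMap.smul_apply, ← map_smul,
    two_smul_mul_FE (hN.mul_mem n hn E hE), LinearMap.map_neg₂, LinearMap.map_neg₂, ← neg_add,
    neg_eq_zero] at identity
  exact identity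

theorem IsLieModule.shiftedCasimir_rightMul_eq_zero (hN : IsLieModule μ L N) (hVarH : InVarietyH μ)
    (h2 : (2 : K) ≠ 0) (h3 : (3 : K) ≠ 0) {E H F : M} (hE : E ∈ L) (hH : H ∈ L) (hF : F ∈ L)
    (hEH : μ E H = E) (hFH : μ F H = -F) (hEF : μ E F = (2⁻¹ : K) • H)
    (hfaith : ∀ n ∈ N, μ n E = 0 → μ n H = 0 → μ n F = 0 → n = 0) :
    shiftedCasimir (hN.rightMul hE) (hN.rightMul hH) (hN.rightMul hF) = 0 := by
  set e := hN.rightMul hE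
  set h := hN.rightMul hH
  set f := hN.rightMul hF
  have he : h * e - e * h = e := by
    ext n
    have := hN.mul_mul n n.2 E hE H hH
    rw [hEH] at this
    exact this.symm
  have hf : f * h - h * f = f := by
    ext n
    have := hN.mul_mul n n.2 F hF H hH
    rw [hFH, map_neg] at this
    exact (neg_sub _ _).symm.trans (neg_eq_iff_eq_neg.mpr this.symm)
  have hef : 2 * (f * e - e * f) = h := by
    ext n
    have := hN.mul_mul n n.2 E hE F hF
    rw [hEF, map_smul] at this
    rw [two_mul]
    change (μ (μ n E) F - μ (μ n F) E) + (μ (μ n E) F - μ (μ n F) E) = μ n H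
    rw [← this, ← two_smul K, smul_inv_smul₀ h2]
  have heh : h * e * h = 0 := by
    ext n
    exact hN.mul_H_mul_E_mul_H_eq_zero hVarH h2 h3 hE hH hEH n.2
  have hehf : e * h * f + f * h * e = 0 := by
    ext n
    exact hN.mul_F_mul_H_mul_E_add_eq_zero hVarH h2 h3 hE hF hEF n.2
  refine shiftedCasimir_eq_zero_of_faithful he hf hef heh hehf fun n hnE hnH hnF => ?_
  exact Subtype.ext (hfaith n n.2 (congrArg Subtype.val hnE) (congrArg Subtype.val hnH)
    (congrArg Subtype.val hnF))

theorem IsLieModule.le_map₂_of_inVarietyH (hN : IsLieModule μ L N) (hVarH : InVarietyH μ)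
    (h2 : (2 : K) ≠ 0) (h3 : (3 : K) ≠ 0) {E H F : M} (hE : E ∈ L) (hH : H ∈ L) (hF : F ∈ L)
    (hEH : μ E H = E) (hFH : μ F H = -F) (hEF : μ E F = (2⁻¹ : K) • H)
    (hfaith : ∀ n ∈ N, μ n E = 0 → μ n H = 0 → μ n F = 0 → n = 0) :
    N ≤ Submodule.map₂ μ N L := by
  intro n hn
  have casimir : (2 : K) • n + (2 : K) • (μ (μ n F) E + μ (μ n E) F) - μ (μ n H) H = 0 := by
    have := LinearMap.congr_fun
      (hN.shiftedCasimir_rightMul_eq_zero hVarH h2 h3 hE hH hF hEH hFH hEF hfaith) ⟨n, hn⟩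
    rw [shiftedCasimir, two_mul, ← one_add_one_eq_two] at this
    rw [two_smul, two_smul]
    exact congrArg Subtype.val this
  have mem {a b : M} (ha : a ∈ L) (hb : b ∈ L) : μ (μ n a) b ∈ Submodule.map₂ μ N L :=
    Submodule.apply_mem_map₂ μ (hN.mul_mem n hn a ha) hb
  rw [← Submodule.smul_mem_iff _ h2, show (2 : K) • n =
    μ (μ n H) H - (2 : K) • (μ (μ n F) E + μ (μ n E) F) by
      linear_combination (norm := module) casimir]
  exact sub_mem (mem hH hH) (Submodule.smul_mem _ _ (add_mem (mem hF hE) (mem hE hF)))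

theorem IsLieModule.balanced_mul_mul_eq_zero (hN : IsLieModule μ L N) (h2 : (2 : K) ≠ 0)
    {P : Type*} [AddCommGroup P] [Module K P] {B : M →ₗ[K] M →ₗ[K] P}
    (hB : ∀ x ∈ N, ∀ y ∈ N, ∀ a ∈ L, B (μ x a) y = B x (μ y a))
    {x y a b : M} (hx : x ∈ N) (hy : y ∈ N) (ha : a ∈ L) (hb : b ∈ L) (hab : μ a b ∈ L) :
    B (μ x (μ a b)) y = 0 := by
  have neg : B (μ x (μ a b)) y = -B (μ x (μ a b)) y :=
    calc B (μ x (μ a b)) y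
        = B (μ (μ x a) b) y - B (μ (μ x b) a) y := by
          rw [hN.mul_mul x hx a ha b hb, map_sub, LinearMap.sub_apply]
      _ = B x (μ (μ y b) a) - B x (μ (μ y a) b) := by
          rw [hB _ (hN.mul_mem x hx a ha) y hy b hb, hB x hx _ (hN.mul_mem y hy b hb) a ha,
            hB _ (hN.mul_mem x hx b hb) y hy a ha, hB x hx _ (hN.mul_mem y hy a ha) b hb]
      _ = -B x (μ y (μ a b)) := by rw [hN.mul_mul y hy a ha b hb, map_sub, neg_sub]
      _ = -B (μ x (μ a b)) y := by rw [hB x hx y hy _ hab]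
  have two : (2 : K) • B (μ x (μ a b)) y = 0 := by
    rw [two_smul]
    exact add_eq_zero_iff_eq_neg.mpr neg
  exact (smul_eq_zero.mp two).resolve_left h2

theorem IsLieModule.balanced_eq_zero (hN : IsLieModule μ L N) (h2 : (2 : K) ≠ 0)
    (hL : ∀ a ∈ L, ∀ b ∈ L, μ a b ∈ L) (hLL : L ≤ Submodule.map₂ μ L L)
    (hNL : N ≤ Submodule.map₂ μ N L)
    {P : Type*} [AddCommGroup P] [Module K P] {B : M →ₗ[K] M →ₗ[K] P}
    (hB : ∀ x ∈ N, ∀ y ∈ N, ∀ a ∈ L, B (μ x a) y = B x (μ y a))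
    {x y : M} (hx : x ∈ N) (hy : y ∈ N) : B x y = 0 := by
  have mul_eq_zero {n : M} (hn : n ∈ N) : L ≤ LinearMap.ker (B.flip y ∘ₗ μ n) :=
    hLL.trans (Submodule.map₂_le.mpr fun a ha b hb =>
      hN.balanced_mul_mul_eq_zero h2 hB hn hy ha hb (hL a ha b hb))
  have ker_le : Submodule.map₂ μ N L ≤ LinearMap.ker (B.flip y) :=
    Submodule.map₂_le.mpr fun n hn a ha => mul_eq_zero hn ha
  exact ker_le (hNL hx)

end LieModule

/-- `J(·, ·, z)` as a bilinear map. -/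
def mjacBilin (μ : M →ₗ[K] M →ₗ[K] M) (z : M) : M →ₗ[K] M →ₗ[K] M :=
  LinearMap.mk₂ K (fun x y => mjac μ x y z)
    (fun x x' y => by simp only [mjac, map_add, LinearMap.add_apply]; abel)
    (fun c x y => by simp only [mjac, map_smul, LinearMap.smul_apply, smul_add])
    (fun x y y' => by simp only [mjac, map_add, LinearMap.add_apply]; abel)
    (fun c x y => by simp only [mjac, map_smul, LinearMap.smul_apply, smul_add])

theorem mjacBilin_apply (μ : M →ₗ[K] M →ₗ[K] M) (x y z : M) :
    mjacBilin μ z x y = mjac μ x y z :=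
  rfl

/-- `N_M` as a submodule of `M`. -/
def NMsubmodule (μ : M →ₗ[K] M →ₗ[K] M) (L : Submodule K M) : Submodule K M where
  carrier := NMset μ L
  zero_mem' a _ b _ := (mjacBilin μ b).map_zero₂ a
  add_mem' hx hy a ha b hb := by
    rw [← mjacBilin_apply, LinearMap.map_add₂, mjacBilin_apply, mjacBilin_apply, hx a ha b hb,
      hy a ha b hb, add_zero]
  smul_mem' c x hx a ha b hb := by
    rw [← mjacBilin_apply, LinearMap.map_smul₂, mjacBilin_apply, hx a ha b hb, smul_zero]

section Malcev

variable {μ : M →ₗ[K] M →ₗ[K] M} {L : Submodule K M}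

theorem mjac_rotate (x y z : M) : mjac μ x y z = mjac μ y z x := by
  unfold mjac
  abel

theorem mjac_swap (hμ : μ.IsAlt) (x y z : M) : mjac μ x y z = -mjac μ y x z := by
  unfold mjac
  rw [← hμ.neg y x, ← hμ.neg z y, ← hμ.neg x z]
  simp only [map_neg, LinearMap.neg_apply]
  abel

theorem IsMalcev.isAlt (hMal : IsMalcev μ) : μ.IsAlt :=
  hMal.1

/-- The linearization of Sagle's identity `J(x, y, xz) = J(x, y, z)x`. -/
theorem IsMalcev.mjac_mul_add_mjac_mul (hMal : IsMalcev μ) (x y w z : M) :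
    mjac μ x y (μ w z) + mjac μ w y (μ x z) = μ (mjac μ x y z) w + μ (mjac μ w y z) x := by
  have malcev_xwyz := hMal.2 x w y z
  have malcev_wxyz := hMal.2 w x y z
  unfold mjac
  rw [← hMal.isAlt.neg (μ w z) y, ← hMal.isAlt.neg (μ x z) y]
  rw [← hMal.isAlt.neg z w, ← hMal.isAlt.neg z x, ← hMal.isAlt.neg w x] at *
  simp only [map_neg, LinearMap.neg_apply, map_add, LinearMap.add_apply] at *
  linear_combination (norm := module) malcev_xwyz + malcev_wxyz

theorem IsMalcev.mjac_mul_left_eq_mjac_mul_right (hMal : IsMalcev μ) {x y a b : M}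
    (hx : x ∈ NMsubmodule μ L) (hy : y ∈ NMsubmodule μ L) (ha : a ∈ L) (hb : b ∈ L) :
    mjac μ (μ x a) y b = mjac μ x (μ y a) b := by
  have sagle := hMal.mjac_mul_add_mjac_mul x b y a
  rw [hx b hb a ha, hy b hb a ha, mjac_swap hMal.isAlt x b, mjac_rotate b x,
    ← mjac_rotate (μ x a) y b] at sagle
  simp only [map_zero, LinearMap.zero_apply, add_zero] at sagle
  exact (neg_add_eq_zero.mp sagle).symm

theorem IsLieSubalgebra.le_NMsubmodule (hL : IsLieSubalgebra μ L) : L ≤ NMsubmodule μ L :=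
  hL.mjac_eq_zero

theorem IsMalcev.isLieModule_NMsubmodule (hMal : IsMalcev μ) (hL : IsLieSubalgebra μ L) :
    IsLieModule μ L (NMsubmodule μ L) where
  mul_mem n hn a ha b hb c hc := by
    rw [hMal.mjac_mul_left_eq_mjac_mul_right hn (hL.le_NMsubmodule hb) ha hc]
    exact hn _ (hL.mul_mem b hb a ha) c hc
  mul_mul n hn a ha b hb := by
    have jacobi : mjac μ n a b = 0 := hn a ha b hb
    unfold mjac at jacobi
    rw [← hMal.isAlt.neg n (μ a b), ← hMal.isAlt.neg n b] at jacobi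
    simp only [map_neg, LinearMap.neg_apply] at jacobi
    linear_combination (norm := module) -jacobi

theorem IsMalcev.mjac_eq_zero_of_mem_NMsubmodule (hMal : IsMalcev μ) (h2 : (2 : K) ≠ 0)
    (hL : IsLieSubalgebra μ L) (hLL : L ≤ Submodule.map₂ μ L L)
    (hNL : NMsubmodule μ L ≤ Submodule.map₂ μ (NMsubmodule μ L) L) {x y c : M}
    (hx : x ∈ NMsubmodule μ L) (hy : y ∈ NMsubmodule μ L) (hc : c ∈ L) : mjac μ x y c = 0 :=
  (hMal.isLieModule_NMsubmodule hL).balanced_eq_zero (B := mjacBilin μ c) h2 hL.mul_mem hLL hNL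
    (fun _ hx _ hy _ ha => hMal.mjac_mul_left_eq_mjac_mul_right hx hy ha hc) hx hy

theorem IsMalcev.mul_mem_NMsubmodule (hMal : IsMalcev μ) (hL : IsLieSubalgebra μ L)
    (hJ : ∀ x ∈ NMsubmodule μ L, ∀ y ∈ NMsubmodule μ L, ∀ c ∈ L, mjac μ x y c = 0) {x y : M}
    (hx : x ∈ NMsubmodule μ L) (hy : y ∈ NMsubmodule μ L) : μ x y ∈ NMsubmodule μ L := by
  intro a ha b hb
  have hya : μ y a ∈ NMsubmodule μ L := (hMal.isLieModule_NMsubmodule hL).mul_mem y hy a ha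
  have hxya : mjac μ x b (μ a y) = 0 := by
    rw [mjac_swap hMal.isAlt, mjac_rotate, ← hMal.isAlt.neg y a, ← mjacBilin_apply, map_neg,
      mjacBilin_apply, hJ x hx _ hya b hb, neg_zero, neg_zero]
  have hxyb : mjac μ x b y = 0 := by
    rw [mjac_swap hMal.isAlt, mjac_rotate, hJ x hx y hy b hb, neg_zero]
  have hyab : mjac μ a b y = 0 := by rw [← mjac_rotate, hy a ha b hb]
  have sagle := hMal.mjac_mul_add_mjac_mul a b x y
  rw [hxya, hxyb, hyab, ← mjac_rotate] at sagle
  simpa only [add_zero, map_zero, LinearMap.zero_apply] using sagle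

theorem IsMalcev.mjac_mul_right (hMal : IsMalcev μ) (hL : IsLieSubalgebra μ L)
    (hJ : ∀ x ∈ NMsubmodule μ L, ∀ y ∈ NMsubmodule μ L, ∀ c ∈ L, mjac μ x y c = 0)
    {x y z a : M} (hx : x ∈ NMsubmodule μ L) (hy : y ∈ NMsubmodule μ L)
    (hz : z ∈ NMsubmodule μ L) (ha : a ∈ L) : mjac μ x y (μ z a) = -μ (mjac μ x y z) a := by
  have hxz : μ x z ∈ NMsubmodule μ L := hMal.mul_mem_NMsubmodule hL hJ hx hz
  have sagle := hMal.mjac_mul_add_mjac_mul x y a z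
  rw [mjac_rotate a y, hJ y hy _ hxz a ha, mjac_rotate a y, hJ y hy z hz a ha, map_zero,
    LinearMap.zero_apply, add_zero, add_zero, ← hMal.isAlt.neg z a, ← mjac_rotate,
    ← mjacBilin_apply, LinearMap.map_neg₂, mjacBilin_apply, mjac_rotate] at sagle
  exact neg_eq_iff_eq_neg.mp sagle

theorem IsMalcev.isLieSubalgebra_NMsubmodule (hMal : IsMalcev μ) (h2 : (2 : K) ≠ 0)
    (hL : IsLieSubalgebra μ L) (hLL : L ≤ Submodule.map₂ μ L L)
    (hNL : NMsubmodule μ L ≤ Submodule.map₂ μ (NMsubmodule μ L) L) :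
    IsLieSubalgebra μ (NMsubmodule μ L) := by
  have hJ : ∀ x ∈ NMsubmodule μ L, ∀ y ∈ NMsubmodule μ L, ∀ c ∈ L, mjac μ x y c = 0 :=
    fun x hx y hy c hc => hMal.mjac_eq_zero_of_mem_NMsubmodule h2 hL hLL hNL hx hy hc
  refine ⟨fun x hx y hy => hMal.mul_mem_NMsubmodule hL hJ hx hy, fun x hx y hy z hz => ?_⟩
  refine (hMal.isLieModule_NMsubmodule hL).balanced_eq_zero (B := mjacBilin μ z) h2 hL.mul_mem
    hLL hNL (fun x hx y hy a ha => ?_) hx hy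
  calc mjac μ (μ x a) y z
      = mjac μ y z (μ x a) := mjac_rotate _ _ _
    _ = -μ (mjac μ y z x) a := hMal.mjac_mul_right hL hJ hy hz hx ha
    _ = -μ (mjac μ z x y) a := by rw [mjac_rotate y z x]
    _ = mjac μ z x (μ y a) := (hMal.mjac_mul_right hL hJ hz hx hy ha).symm
    _ = mjac μ x (μ y a) z := mjac_rotate _ _ _

end Malcev

section SlTwo

variable {μ : M →ₗ[K] M →ₗ[K] M} {E H F : M}

theorem isLieSubalgebra_span (hμ : μ.IsAlt) (hEH : μ E H = E)
    (hFH : μ F H = -F) (hEF : μ E F = (2⁻¹ : K) • H) :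
    IsLieSubalgebra μ (Submodule.span K {E, H, F}) := by
  have hHE : μ H E = -E := by rw [← hμ.neg, hEH]
  have hHF : μ H F = F := by rw [← hμ.neg, hFH, neg_neg]
  have hFE : μ F E = -((2⁻¹ : K) • H) := by rw [← hμ.neg, hEF]
  constructor
  · rw [← Submodule.map₂_le, Submodule.map₂_span_span, Submodule.span_le]
    have hE : E ∈ Submodule.span K {E, H, F} := Submodule.subset_span (by simp)
    have hH : H ∈ Submodule.span K {E, H, F} := Submodule.subset_span (by simp)
    have hF : F ∈ Submodule.span K {E, H, F} := Submodule.subset_span (by simp)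
    rintro _ ⟨a, rfl | rfl | rfl, b, rfl | rfl | rfl, rfl⟩ <;>
      simp [hμ.self_eq_zero, *, Submodule.smul_mem]
  · intro x hx y hy z hz
    obtain ⟨p, q, r, rfl⟩ := Submodule.mem_span_triple.mp hx
    obtain ⟨p', q', r', rfl⟩ := Submodule.mem_span_triple.mp hy
    obtain ⟨p'', q'', r'', rfl⟩ := Submodule.mem_span_triple.mp hz
    simp only [mjac, map_add, map_smul, map_neg, map_zero, LinearMap.add_apply,
      LinearMap.smul_apply, LinearMap.neg_apply, LinearMap.zero_apply, hEH, hHE, hFH, hHF,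
      hEF, hFE, hμ.self_eq_zero]
    module

theorem span_le_map₂_span (h2 : (2 : K) ≠ 0) (hEH : μ E H = E) (hFH : μ F H = -F)
    (hEF : μ E F = (2⁻¹ : K) • H) :
    Submodule.span K {E, H, F} ≤
      Submodule.map₂ μ (Submodule.span K {E, H, F}) (Submodule.span K {E, H, F}) := by
  rw [Submodule.map₂_span_span, Submodule.span_le]
  have mul_mem {a b : M} (ha : a ∈ ({E, H, F} : Set M)) (hb : b ∈ ({E, H, F} : Set M)) :
      μ a b ∈ Submodule.span K (Set.image2 (fun x y => μ x y) {E, H, F} {E, H, F}) :=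
    Submodule.subset_span (Set.mem_image2_of_mem ha hb)
  have hE := mul_mem (a := E) (b := H) (by simp) (by simp)
  have hF := mul_mem (a := F) (b := H) (by simp) (by simp)
  have hH := mul_mem (a := E) (b := F) (by simp) (by simp)
  rw [hEH] at hE
  rw [hFH, neg_mem_iff] at hF
  rw [hEF, Submodule.smul_mem_iff _ (inv_ne_zero h2)] at hH
  rintro _ (rfl | rfl | rfl) <;> assumption

end SlTwo

/-- If `M` is a Malcev algebra in the variety 𝓗 containing
`L = sl₂(F)` and `mL ≠ 0` for every nonzero `m ∈ M`, then the subalgebra `N_M`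
of `M` is a Lie algebra: it is closed under the product and `J(x,y,z) = 0` for
all `x, y, z ∈ N_M`. -/
theorem stmt2
    (h2 : (2 : K) ≠ 0) (h3 : (3 : K) ≠ 0)
    (μ : M →ₗ[K] M →ₗ[K] M) (hMal : IsMalcev μ) (hVarH : InVarietyH μ)
    (E H F : M) (hind : LinearIndependent K ![E, H, F])
    (hEH : μ E H = E) (hFH : μ F H = -F) (hEF : μ E F = (2⁻¹ : K) • H)
    (L : Submodule K M) (hL : L = Submodule.span K {E, H, F})
    (hfaith : ∀ m : M, m ≠ 0 → ∃ a ∈ L, μ m a ≠ 0) :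
    (∀ x ∈ NMset μ L, ∀ y ∈ NMset μ L, μ x y ∈ NMset μ L) ∧
    (∀ x ∈ NMset μ L, ∀ y ∈ NMset μ L, ∀ z ∈ NMset μ L, mjac μ x y z = 0) := by
  subst hL
  have hL := isLieSubalgebra_span hMal.isAlt hEH hFH hEF
  have hN := hMal.isLieModule_NMsubmodule hL
  have hE : E ∈ Submodule.span K {E, H, F} := Submodule.subset_span (by simp)
  have hH : H ∈ Submodule.span K {E, H, F} := Submodule.subset_span (by simp)
  have hF : F ∈ Submodule.span K {E, H, F} := Submodule.subset_span (by simp)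
  have hann (n : M) (hnE : μ n E = 0) (hnH : μ n H = 0) (hnF : μ n F = 0) : n = 0 := by
    by_contra hne
    obtain ⟨a, ha, hna⟩ := hfaith n hne
    have hker : Submodule.span K {E, H, F} ≤ LinearMap.ker (μ n) := by
      rw [Submodule.span_le]
      rintro _ (rfl | rfl | rfl) <;> assumption
    exact hna (hker ha)
  have hNL := hN.le_map₂_of_inVarietyH hVarH h2 h3 hE hH hF hEH hFH hEF fun n _ => hann n
  have hLie := hMal.isLieSubalgebra_NMsubmodule h2 hL (span_le_map₂_span h2 hEH hFH hEF) hNL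
  exact ⟨hLie.mul_mem, hLie.mjac_eq_zero⟩

end
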